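/- Let G be a P4-sparse graph and let A be a set of four vertices inducing a P4 in G. Then there do not exist vertices v in P(A), x in T(A), and y in I(A) such that the only edge of G among {v, x, y} is xy. -/

import Mathlib

open SimpleGraph

variable {V : Type*}

/-- `a, b, c, d` form an induced path on four vertices (a `P4`) in `G`. -/
def IsP4 (G : SimpleGraph V) (a b c d : V) : Prop :=
  a ≠ b ∧ a ≠ c ∧ a ≠ d ∧ b ≠ c ∧ b ≠ d ∧ c ≠ d ∧
    G.Adj a b ∧ G.Adj b c ∧ G.Adj c d ∧ ¬G.Adj a c ∧ ¬G.Adj a d ∧ ¬G.Adj b d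

/-- A graph is a cograph if it contains no induced `P4`. -/
def IsCograph (G : SimpleGraph V) : Prop :=
  ∀ a b c d : V, ¬IsP4 G a b c d

/-- The vertex set `A` induces a `P4` in `G`. -/
def InducesP4 (G : SimpleGraph V) (A : Set V) : Prop :=
  ∃ a b c d : V, IsP4 G a b c d ∧ A = {a, b, c, d}

/-- `G` is `P4`-sparse: every set of five vertices induces at most one `P4`. -/
def P4Sparse (G : SimpleGraph V) : Prop :=
  ∀ s : Set V, s.ncard = 5 →
    ∀ A B : Set V, A ⊆ s → B ⊆ s → InducesP4 G A → InducesP4 G B → A = B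

/-- `F` is a deletion set of `G`: a set of edges of `G` whose removal yields a cograph. -/
def IsDeletionSet (G : SimpleGraph V) (F : Set (Sym2 V)) : Prop :=
  F ⊆ G.edgeSet ∧ IsCograph (G.deleteEdges F)

/-- The minimum size of a deletion set of `G`. -/
noncomputable def cographAlpha (G : SimpleGraph V) : ℕ :=
  sInf {n | ∃ F : Set (Sym2 V), IsDeletionSet G F ∧ F.ncard = n}

/-- `T(A)`: the vertices outside `A` adjacent to all vertices of `A`. -/
def tSet (G : SimpleGraph V) (A : Set V) : Set V :=
  {v | v ∉ A ∧ ∀ a ∈ A, G.Adj v a}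

/-- `I(A)`: the vertices outside `A` adjacent to no vertex of `A`. -/
def iSet (G : SimpleGraph V) (A : Set V) : Set V :=
  {v | v ∉ A ∧ ∀ a ∈ A, ¬G.Adj v a}

/-- `P(A)`: the vertices `v` outside `A` with `1 ≤ |N(v) ∩ A| ≤ 3`. -/
def pSet (G : SimpleGraph V) (A : Set V) : Set V :=
  {v | v ∉ A ∧ 1 ≤ (G.neighborSet v ∩ A).ncard ∧ (G.neighborSet v ∩ A).ncard ≤ 3}

/-!
In a `P4`-sparse graph a vertex `v` outside a `P4` on `A` cannot have exactly one neighbor `p`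
in `A`: walking from `p` two steps along the path would give a second `P4` inside `A ∪ {v}`. So if
`v` has a neighbor in `A`, it has two, `p ≠ q`. If moreover `x ∈ T(A)` and `y ∈ I(A)` are adjacent
to each other but not to `v`, then `v - p - x - y` and `v - q - x - y` are two `P4`s among the five
vertices `v, p, q, x, y`.
-/

section

variable {G : SimpleGraph V} {A B : Set V} {v x y p q : V}

lemma isP4_of_adj {a b c d : V} (hab : G.Adj a b) (hbc : G.Adj b c) (hcd : G.Adj c d)
    (hac : ¬G.Adj a c) (had : ¬G.Adj a d) (hbd : ¬G.Adj b d) : IsP4 G a b c d := by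
  have hac_ne : a ≠ c := by rintro rfl; exact had hcd
  have had_ne : a ≠ d := by rintro rfl; exact hac hcd.symm
  have hbd_ne : b ≠ d := by rintro rfl; exact had hab
  exact ⟨hab.ne, hac_ne, had_ne, hbc.ne, hbd_ne, hcd.ne, hab, hbc, hcd, hac, had, hbd⟩

lemma IsP4.inducesP4 {a b c d : V} (h : IsP4 G a b c d) : InducesP4 G {a, b, c, d} :=
  ⟨a, b, c, d, h, rfl⟩

lemma InducesP4.ncard_eq_four (hA : InducesP4 G A) : A.ncard = 4 := by
  obtain ⟨a, b, c, d, ⟨hab, hac, had, hbc, hbd, hcd, -⟩, rfl⟩ := hA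
  rw [Set.ncard_insert_of_notMem (by simp [hab, hac, had]),
    Set.ncard_insert_of_notMem (by simp [hbc, hbd]), Set.ncard_pair hcd]

lemma InducesP4.finite (hA : InducesP4 G A) : A.Finite :=
  Set.finite_of_ncard_ne_zero (by simp [hA.ncard_eq_four])

lemma InducesP4.exists_adj_adj_not_adj_ne (hA : InducesP4 G A) (hp : p ∈ A) :
    ∃ r ∈ A, ∃ s ∈ A, s ≠ p ∧ G.Adj p r ∧ G.Adj r s ∧ ¬G.Adj p s := by
  obtain ⟨a, b, c, d, ⟨-, hac_ne, -, -, hbd_ne, -, hab, hbc, hcd, hac, -, hbd⟩, rfl⟩ := hA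
  rcases hp with rfl | rfl | rfl | rfl
  · exact ⟨b, by simp, c, by simp, hac_ne.symm, hab, hbc, hac⟩
  · exact ⟨c, by simp, d, by simp, hbd_ne.symm, hbc, hcd, hbd⟩
  · exact ⟨b, by simp, a, by simp, hac_ne, hbc.symm, hab.symm, fun h => hac h.symm⟩
  · exact ⟨c, by simp, b, by simp, hbd_ne, hcd.symm, hbc.symm, fun h => hbd h.symm⟩

lemma P4Sparse.eq_of_subset_insert (hG : P4Sparse G) (hA : InducesP4 G A) (hB : InducesP4 G B)
    (hBA : B ⊆ insert v A) : B = A := by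
  by_cases hv : v ∈ A
  · rw [Set.insert_eq_of_mem hv] at hBA
    exact Set.eq_of_subset_of_ncard_le hBA
      (hA.ncard_eq_four.trans hB.ncard_eq_four.symm).le hA.finite
  · have hcard : (insert v A).ncard = 5 := by
      rw [Set.ncard_insert_of_notMem hv hA.finite, hA.ncard_eq_four]
    exact hG _ hcard B A hBA (Set.subset_insert v A) hB hA

lemma P4Sparse.exists_adj_ne (hG : P4Sparse G) (hA : InducesP4 G A) (hv : v ∉ A) (hp : p ∈ A)
    (hvp : G.Adj v p) : ∃ q ∈ A, q ≠ p ∧ G.Adj v q := by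
  by_contra! hunique
  obtain ⟨r, hr, s, hs, hsp, hpr, hrs, hps⟩ := hA.exists_adj_adj_not_adj_ne hp
  have hvr : ¬G.Adj v r := hunique r hr hpr.ne'
  have hvs : ¬G.Adj v s := hunique s hs hsp
  have hB := (isP4_of_adj hvp hpr hrs hvr hvs hps).inducesP4
  have hBA : {v, p, r, s} = A := hG.eq_of_subset_insert (v := v) hA hB (by grind)
  exact hv (hBA ▸ Set.mem_insert v _)

lemma P4Sparse.eq_of_isP4_of_isP4 (hG : P4Sparse G) (hp : IsP4 G v p x y)
    (hq : IsP4 G v q x y) : p = q := by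
  have heq : ({v, p, x, y} : Set V) = {v, q, x, y} :=
    hG.eq_of_subset_insert (v := p) hq.inducesP4 hp.inducesP4 (by grind)
  have hmem : p ∈ ({v, q, x, y} : Set V) := heq ▸ by simp
  obtain ⟨hvp, -, -, hpx, hpy, -⟩ := hp
  simpa [hvp.symm, hpx, hpy] using hmem

lemma notMem_iSet_of_mem_pSet (hv : v ∈ pSet G A) : v ∉ iSet G A := by
  rintro ⟨-, hvA⟩
  obtain ⟨p, hvp, hp⟩ := Set.nonempty_of_ncard_ne_zero (Nat.one_le_iff_ne_zero.mp hv.2.1)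
  exact hvA p hp hvp

theorem p4Sparse_obs_2_14_general (hG : P4Sparse G) (hA : InducesP4 G A) (hx : x ∈ tSet G A)
    (hy : y ∈ iSet G A) (hvx : ¬G.Adj v x) (hvy : ¬G.Adj v y) (hxy : G.Adj x y) :
    v ∈ iSet G A := by
  have hv : v ∉ A := fun hv => hvx (hx.2 v hv).symm
  have isP4_of_mem {w : V} (hw : w ∈ A) (hvw : G.Adj v w) : IsP4 G v w x y :=
    isP4_of_adj hvw (hx.2 w hw).symm hxy hvx hvy fun hwy => hy.2 w hw hwy.symm
  refine ⟨hv, fun p hp hvp => ?_⟩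
  obtain ⟨q, hq, hqp, hvq⟩ := hG.exists_adj_ne hA hv hp hvp
  exact hqp (hG.eq_of_isP4_of_isP4 (isP4_of_mem hq hvq) (isP4_of_mem hp hvp))

end

/-- **Observation 2.14.** If `G` is `P4`-sparse and `A` induces a `P4`, then
there are no `v ∈ P(A)`, `x ∈ T(A)`, `y ∈ I(A)` such that the only edge of `G` among
`{v, x, y}` is `xy`. -/
theorem p4Sparse_obs_2_14 (G : SimpleGraph V) (hG : P4Sparse G)
    (a b c d : V) (hP4 : IsP4 G a b c d) (A : Set V) (hA : A = {a, b, c, d}) :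
    ¬∃ v x y : V, v ∈ pSet G A ∧ x ∈ tSet G A ∧ y ∈ iSet G A ∧
      ¬G.Adj v x ∧ ¬G.Adj v y ∧ G.Adj x y := by
  rintro ⟨v, x, y, hv, hx, hy, hvx, hvy, hxy⟩
  exact notMem_iSet_of_mem_pSet hv
    (p4Sparse_obs_2_14_general hG ⟨a, b, c, d, hP4, hA⟩ hx hy hvx hvy hxy)
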